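/- arXiv:2308.02902 — 3 statements merged into one kernel-verified Lean document; each statement's English description precedes it below -/
import Mathlib

section
/- Let n ≥ 1, let O be a real orthogonal n×n matrix, let W_r be a real n×n matrix, W_in a real n×m matrix, ρ, ω real numbers, and β ∈ (0,1]. Define the ES²N state map G(u,x) = β·tanh(ρ·W_r·x + ω·W_in·u) + (1−β)·O·x for u ∈ ℝ^m, x ∈ ℝ^n, where tanh is applied entrywise. Write σ = ‖ρ·W_r‖ for the operator norm of ρ·W_r induced by the Euclidean norm. Then for every fixed input u ∈ ℝ^m and all states x, x' ∈ ℝ^n, ‖G(u,x) − G(u,x')‖ ≤ (1 − β(1−σ))·‖x − x'‖, where ‖·‖ is the Euclidean norm on ℝ^n. -/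
/-!
The state map is a combination, with weights `β` and `1 - β`, of two Lipschitz maps: an
entrywise 1-Lipschitz activation after an affine map with linear part `ρ • Wr`, with constant `σ`,
and the isometry `O`, with constant `1`. Its Lipschitz constant is thus at most
`β * σ + (1 - β) = 1 - β * (1 - σ)`.
-/

open Matrix

open scoped NNReal ENNReal

theorem hasDerivAt_tanh (x : ℝ) : HasDerivAt Real.tanh (Real.cosh x ^ 2)⁻¹ x := by
  have hquot := (Real.hasDerivAt_sinh x).div (Real.hasDerivAt_cosh x) (Real.cosh_pos x).ne'
  have htanh : Real.tanh = Real.sinh / Real.cosh := funext Real.tanh_eq_sinh_div_cosh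
  rwa [← htanh, ← sq, ← sq, Real.cosh_sq_sub_sinh_sq, one_div] at hquot

theorem lipschitzWith_tanh : LipschitzWith 1 Real.tanh := by
  refine lipschitzWith_of_nnnorm_deriv_le (fun x ↦ (hasDerivAt_tanh x).differentiableAt) fun x ↦ ?_
  rw [(hasDerivAt_tanh x).deriv, ← NNReal.coe_le_coe, coe_nnnorm, NNReal.coe_one,
    Real.norm_of_nonneg (by positivity)]
  exact inv_le_one_of_one_le₀ (one_le_pow₀ (Real.one_le_cosh x))

theorem lipschitzWith_piLp_map {ι : Type*} [Fintype ι] {p : ℝ≥0∞} [Fact (1 ≤ p)]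
    {α β : ι → Type*} [∀ i, PseudoEMetricSpace (α i)] [∀ i, PseudoEMetricSpace (β i)]
    {K : ℝ≥0} {f : ∀ i, α i → β i} (hf : ∀ i, LipschitzWith K (f i)) :
    LipschitzWith K (WithLp.map p (Pi.map f)) := by
  intro x y
  rcases p.dichotomy with rfl | hp
  · simp only [PiLp.edist_eq_iSup, ENNReal.mul_iSup]
    exact iSup_mono fun i ↦ hf i (x i) (y i)
  · have hp₀ : 0 < p.toReal := zero_lt_one.trans_le hp
    rw [PiLp.edist_eq_sum hp₀, PiLp.edist_eq_sum hp₀]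
    calc (∑ i, edist (f i (x i)) (f i (y i)) ^ p.toReal) ^ (1 / p.toReal)
        ≤ (∑ i, (K * edist (x i) (y i)) ^ p.toReal) ^ (1 / p.toReal) := by
          gcongr with i
          exact hf i (x i) (y i)
      _ = K * (∑ i, edist (x i) (y i) ^ p.toReal) ^ (1 / p.toReal) := by
          simp only [ENNReal.mul_rpow_of_nonneg _ _ hp₀.le, ← Finset.mul_sum]
          rw [ENNReal.mul_rpow_of_nonneg _ _ (by positivity), one_div,
            ENNReal.rpow_rpow_inv hp₀.ne']

theorem norm_toEuclideanCLM_le_one_of_conjTranspose_mul_self {𝕜 ι : Type*} [RCLike 𝕜]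
    [Fintype ι] [DecidableEq ι] {O : Matrix ι ι 𝕜} (hO : Oᴴ * O = 1) :
    ‖toEuclideanCLM (𝕜 := 𝕜) O‖ ≤ 1 := by
  have hstar : star (toEuclideanCLM (𝕜 := 𝕜) O) * toEuclideanCLM (𝕜 := 𝕜) O = 1 := by
    rw [← map_star, ← map_mul, star_eq_conjTranspose, hO, map_one]
  have hnorm : ∀ v, ‖toEuclideanCLM (𝕜 := 𝕜) O v‖ = ‖v‖ :=
    (ContinuousLinearMap.norm_map_iff_adjoint_comp_self _).2 hstar
  exact ContinuousLinearMap.opNorm_le_bound _ zero_le_one fun v ↦ by rw [hnorm, one_mul]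

theorem es2n_lipschitz_general {ι : Type*} [Fintype ι] [DecidableEq ι]
    {φ : ℝ → ℝ} (hφ : LipschitzWith 1 φ) {O W : Matrix ι ι ℝ}
    (hO : ‖toEuclideanCLM (𝕜 := ℝ) O‖ ≤ 1) {b : ι → ℝ} {β : ℝ} (hβ : β ∈ Set.Icc (0 : ℝ) 1)
    {F : EuclideanSpace ℝ ι → EuclideanSpace ℝ ι}
    (hF : ∀ x i, F x i = β * φ ((W *ᵥ x) i + b i) + (1 - β) * (O *ᵥ x) i)
    (x x' : EuclideanSpace ℝ ι) :
    ‖F x - F x'‖ ≤ (1 - β * (1 - ‖toEuclideanCLM (𝕜 := ℝ) W‖)) * ‖x - x'‖ := by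
  set A := toEuclideanCLM (𝕜 := ℝ) W
  set R := toEuclideanCLM (𝕜 := ℝ) O
  let activate : EuclideanSpace ℝ ι → EuclideanSpace ℝ ι := WithLp.map 2 (Pi.map fun _ ↦ φ)
  have hF_eq : F = fun x ↦ β • activate (A x + WithLp.toLp 2 b) + (1 - β) • R x := by
    ext x i
    exact hF x i
  have hactivate : LipschitzWith 1 activate := lipschitzWith_piLp_map fun _ ↦ hφ
  have haffine : LipschitzWith ‖A‖₊ fun x ↦ A x + WithLp.toLp 2 b := by
    simpa using A.lipschitz.add (LipschitzWith.const (WithLp.toLp 2 b))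
  have hlip : LipschitzWith (‖β‖₊ * (1 * ‖A‖₊) + ‖1 - β‖₊ * ‖R‖₊) F := by
    rw [hF_eq]
    exact ((lipschitzWith_smul β).comp (hactivate.comp haffine)).add
      ((lipschitzWith_smul (1 - β)).comp R.lipschitz)
  have hβ₁ : 0 ≤ 1 - β := sub_nonneg.2 hβ.2
  calc ‖F x - F x'‖ ≤ (‖β‖ * (1 * ‖A‖) + ‖1 - β‖ * ‖R‖) * ‖x - x'‖ := hlip.norm_sub_le x x'
    _ ≤ (β * ‖A‖ + (1 - β) * 1) * ‖x - x'‖ := by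
      rw [one_mul, Real.norm_of_nonneg hβ.1, Real.norm_of_nonneg hβ₁]
      gcongr
    _ = (1 - β * (1 - ‖A‖)) * ‖x - x'‖ := by ring

/-- The ES²N state map `G(u,x) = β·tanh(ρ·W_r·x + ω·W_in·u) + (1−β)·O·x` is Lipschitz in the
state with constant `1 − β(1−σ)`, where `σ = ‖ρ·W_r‖` is the Euclidean operator norm. -/
theorem es2n_lipschitz {n m : ℕ} (hn : 1 ≤ n)
    (O Wr : Matrix (Fin n) (Fin n) ℝ) (hO : Oᵀ * O = 1)
    (Win : Matrix (Fin n) (Fin m) ℝ) (ρ ω β σ : ℝ) (hβ : β ∈ Set.Ioc (0 : ℝ) 1)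
    (hσ : σ = ‖Matrix.toEuclideanCLM (𝕜 := ℝ) (ρ • Wr)‖)
    (G : EuclideanSpace ℝ (Fin m) → EuclideanSpace ℝ (Fin n) → EuclideanSpace ℝ (Fin n))
    (hG : ∀ (u : EuclideanSpace ℝ (Fin m)) (x : EuclideanSpace ℝ (Fin n)) (i : Fin n),
      G u x i = β * Real.tanh ((ρ • Wr).mulVec x i + (ω • Win).mulVec u i)
        + (1 - β) * O.mulVec x i)
    (u : EuclideanSpace ℝ (Fin m)) (x x' : EuclideanSpace ℝ (Fin n)) :
    ‖G u x - G u x'‖ ≤ (1 - β * (1 - σ)) * ‖x - x'‖ :=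
  hσ ▸ es2n_lipschitz_general lipschitzWith_tanh
    (norm_toEuclideanCLM_le_one_of_conjTranspose_mul_self hO) (Set.Ioc_subset_Icc_self hβ)
    (hG u) x x'
end

section
/- Let n ≥ 1, let O be a real orthogonal n×n matrix, W a real n×n matrix, D a real diagonal n×n matrix, β ∈ (0,1], and γ, σ ≥ 0 with ‖D‖ ≤ γ and ‖W‖ = σ (operator norms induced by the Euclidean norm). Let J = β·D·W + (1−β)·O. Then every singular value s of J — that is, every nonnegative real number s such that s² is an eigenvalue of the symmetric matrix J·Jᵀ — satisfies (1−β) − β·γ·σ ≤ s ≤ (1−β) + β·γ·σ. -/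
open Matrix

/-!
In a unital C⋆-algebra, if `s ≥ 0` and `s²` lies in the spectrum of `x * star x`, then `s ≤ ‖x‖`
because `‖x * star x‖ = ‖x‖²`. Inverting a unit inverts its spectrum, so for invertible `x` the same
bound for `star x⁻¹` gives `‖x⁻¹‖⁻¹ ≤ s`. Adding `a` to `x` moves both bounds by at most `‖a‖`, and
for `x = c • u` with `u` unitary and `c ≠ 0` they coincide with `‖c‖`. For the Jacobian, `c = 1 - β`
and `a = β • (D * W)`, so that `‖a‖ ≤ β * γ * σ`.
-/

theorem nontrivial_of_mem_spectrum {R A : Type*} [CommSemiring R] [Ring A] [Algebra R A] {a : A}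
    {r : R} (hr : r ∈ spectrum R a) : Nontrivial A :=
  not_subsingleton_iff_nontrivial.1 fun _ => by simp at hr

section NormedRing

variable {A : Type*} [NormedRing A] [HasSummableGeomSeries A]

theorem inv_norm_inv_sub_norm_le_inv_norm_inv_add (x : Aˣ) (a : A)
    (h : ‖a‖ < ‖(↑x⁻¹ : A)‖⁻¹) :
    ‖(↑x⁻¹ : A)‖⁻¹ - ‖a‖ ≤ ‖(↑(x.add a h)⁻¹ : A)‖⁻¹ := by
  set y := x.add a h
  have norm_inv_x_pos : 0 < ‖(↑x⁻¹ : A)‖ := inv_pos.1 ((norm_nonneg a).trans_lt h)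
  have : Nontrivial A := nontrivial_of_ne _ _ (norm_pos_iff.1 norm_inv_x_pos)
  have resolvent_identity : (↑y⁻¹ : A) = ↑x⁻¹ - ↑x⁻¹ * a * ↑y⁻¹ := by
    have hy : a = y - x := by simp [y]
    simp [hy, mul_sub, sub_mul, mul_assoc]
  have norm_inv_le : ‖(↑y⁻¹ : A)‖ ≤ ‖(↑x⁻¹ : A)‖ + ‖(↑x⁻¹ : A)‖ * ‖a‖ * ‖(↑y⁻¹ : A)‖ :=
    calc
      ‖(↑y⁻¹ : A)‖ = ‖(↑x⁻¹ : A) - ↑x⁻¹ * a * ↑y⁻¹‖ := congrArg norm resolvent_identity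
      _ ≤ ‖(↑x⁻¹ : A)‖ + ‖(↑x⁻¹ : A) * a * ↑y⁻¹‖ := norm_sub_le _ _
      _ ≤ _ := by grw [norm_mul₃_le]
  have norm_inv_y_pos : 0 < ‖(↑y⁻¹ : A)‖ := Units.norm_pos y⁻¹
  field_simp
  linarith

end NormedRing

section CStarRing

variable {𝕜 A : Type*} [NormedField 𝕜] [NormedRing A] [NormedAlgebra 𝕜 A] [CompleteSpace A]
  [StarRing A] [CStarRing A]

theorem sqrt_norm_le_norm_of_mem_spectrum_mul_star {x : A} {r : 𝕜}
    (hr : r ∈ spectrum 𝕜 (x * star x)) : √‖r‖ ≤ ‖x‖ := by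
  have : Nontrivial A := nontrivial_of_mem_spectrum hr
  refine Real.sqrt_le_iff.2 ⟨norm_nonneg x, ?_⟩
  calc
    ‖r‖ ≤ ‖x * star x‖ := spectrum.norm_le_norm_of_mem hr
    _ = ‖x‖ ^ 2 := by rw [CStarRing.norm_self_mul_star, sq]

theorem inv_norm_inv_le_sqrt_norm_of_mem_spectrum_mul_star {x : Aˣ} {r : 𝕜}
    (hr : r ∈ spectrum 𝕜 (x * star x : A)) : ‖(↑x⁻¹ : A)‖⁻¹ ≤ √‖r‖ := by
  have r_ne_zero : r ≠ 0 := spectrum.ne_zero_of_mem_of_unit (a := x * star x) hr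
  have hr_inv : r⁻¹ ∈ spectrum 𝕜 (star (↑x⁻¹ : A) * star (star (↑x⁻¹ : A))) := by
    simpa using spectrum.inv₀_mem_inv_iff (a := x * star x) |>.2 hr
  have inv_sqrt_le : (√‖r‖)⁻¹ ≤ ‖(↑x⁻¹ : A)‖ := by
    simpa only [norm_inv, Real.sqrt_inv, norm_star] using
      sqrt_norm_le_norm_of_mem_spectrum_mul_star hr_inv
  exact inv_le_of_inv_le₀ (by positivity) inv_sqrt_le

theorem inv_norm_inv_sub_norm_le_sqrt_norm_of_mem_spectrum {x : Aˣ} {a : A} {r : 𝕜}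
    (hr : r ∈ spectrum 𝕜 ((x + a) * star (x + a))) : ‖(↑x⁻¹ : A)‖⁻¹ - ‖a‖ ≤ √‖r‖ := by
  rcases lt_or_ge ‖a‖ ‖(↑x⁻¹ : A)‖⁻¹ with h | h
  · exact (inv_norm_inv_sub_norm_le_inv_norm_inv_add x a h).trans
      (inv_norm_inv_le_sqrt_norm_of_mem_spectrum_mul_star (x := x.add a h) hr)
  · exact (sub_nonpos.2 h).trans (Real.sqrt_nonneg _)

theorem abs_sqrt_norm_sub_norm_le_of_mem_spectrum_smul_unitary_add {u : A} (hu : u ∈ unitary A)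
    {c : 𝕜} {a : A} {r : 𝕜} (hr : r ∈ spectrum 𝕜 ((c • u + a) * star (c • u + a))) :
    |√‖r‖ - ‖c‖| ≤ ‖a‖ := by
  have : Nontrivial A := nontrivial_of_mem_spectrum hr
  have upper : √‖r‖ ≤ ‖c‖ + ‖a‖ :=
    calc
      √‖r‖ ≤ ‖c • u + a‖ := sqrt_norm_le_norm_of_mem_spectrum_mul_star hr
      _ ≤ ‖c • u‖ + ‖a‖ := norm_add_le _ _
      _ = ‖c‖ + ‖a‖ := by rw [norm_smul, CStarRing.norm_of_mem_unitary hu, mul_one]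
  have lower : ‖c‖ - ‖a‖ ≤ √‖r‖ := by
    rcases eq_or_ne c 0 with rfl | hc
    · simpa using (neg_nonpos.2 (norm_nonneg a)).trans (Real.sqrt_nonneg _)
    let x : Aˣ := Units.mk0 c hc • Unitary.toUnits ⟨u, hu⟩
    have norm_inv_x : ‖(↑x⁻¹ : A)‖ = ‖c‖⁻¹ := by
      have inv_x : (↑x⁻¹ : A) = c⁻¹ • star u := rfl
      rw [inv_x, norm_smul, norm_inv, norm_star, CStarRing.norm_of_mem_unitary hu, mul_one]
    simpa only [norm_inv_x, inv_inv] using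
      inv_norm_inv_sub_norm_le_sqrt_norm_of_mem_spectrum (x := x) hr
  exact abs_sub_le_iff.2 ⟨by linarith, by linarith⟩

end CStarRing

open scoped Matrix.Norms.L2Operator in
theorem es2n_jacobian_singular_values_bounds_general {𝕜 n : Type*} [RCLike 𝕜] [Fintype n]
    [DecidableEq n] {O W D : Matrix n n 𝕜} (hO : O ∈ unitaryGroup n 𝕜) {β : 𝕜} {γ σ : ℝ}
    (hD : ‖toEuclideanCLM (𝕜 := 𝕜) D‖ ≤ γ) (hW : ‖toEuclideanCLM (𝕜 := 𝕜) W‖ ≤ σ)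
    {J : Matrix n n 𝕜} (hJ : J = β • (D * W) + (1 - β) • O)
    {s : ℝ} (hs : 0 ≤ s) (hs2 : (s : 𝕜) ^ 2 ∈ spectrum 𝕜 (J * Jᴴ)) :
    |s - ‖1 - β‖| ≤ ‖β‖ * γ * σ := by
  rw [l2_opNorm_toEuclideanCLM] at hD hW
  have hγ : 0 ≤ γ := (norm_nonneg D).trans hD
  have norm_sq_s : √‖(s : 𝕜) ^ 2‖ = s := by simp [hs]
  rw [hJ, add_comm, ← star_eq_conjTranspose] at hs2
  calc
    |s - ‖1 - β‖| = |√‖(s : 𝕜) ^ 2‖ - ‖1 - β‖| := by rw [norm_sq_s]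
    _ ≤ ‖β • (D * W)‖ := abs_sqrt_norm_sub_norm_le_of_mem_spectrum_smul_unitary_add hO hs2
    _ ≤ ‖β‖ * (‖D‖ * ‖W‖) := by rw [norm_smul]; gcongr; exact norm_mul_le D W
    _ ≤ ‖β‖ * γ * σ := by rw [mul_assoc]; gcongr

/-- Singular-value bounds for the ES²N Jacobian: every singular value `s` of
`J = β·D·W + (1−β)·O` (i.e. `s ≥ 0` with `s²` an eigenvalue of `J·Jᵀ`) satisfies
`(1−β) − β·γ·σ ≤ s ≤ (1−β) + β·γ·σ`. -/
theorem es2n_jacobian_singular_values_bounds {n : ℕ} (hn : 1 ≤ n)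
    (O W D : Matrix (Fin n) (Fin n) ℝ) (hO : Oᵀ * O = 1) (hD : D.IsDiag)
    (β γ σ : ℝ) (hβ : β ∈ Set.Ioc (0 : ℝ) 1) (hγ : 0 ≤ γ) (hσ : 0 ≤ σ)
    (hDn : ‖Matrix.toEuclideanCLM (𝕜 := ℝ) D‖ ≤ γ)
    (hW : ‖Matrix.toEuclideanCLM (𝕜 := ℝ) W‖ = σ)
    (J : Matrix (Fin n) (Fin n) ℝ) (hJ : J = β • (D * W) + (1 - β) • O)
    (s : ℝ) (hs : 0 ≤ s) (hs2 : s ^ 2 ∈ spectrum ℝ (J * Jᵀ)) :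
    (1 - β) - β * γ * σ ≤ s ∧ s ≤ (1 - β) + β * γ * σ := by
  have norm_β : ‖β‖ = β := Real.norm_of_nonneg hβ.1.le
  have norm_one_sub_β : ‖1 - β‖ = 1 - β := Real.norm_of_nonneg (sub_nonneg.2 hβ.2)
  have O_mem : O ∈ unitaryGroup (Fin n) ℝ := mem_unitaryGroup_iff'.2 hO
  have hJs : s ^ 2 ∈ spectrum ℝ (J * Jᴴ) := hs2
  have distance_le := es2n_jacobian_singular_values_bounds_general O_mem hDn hW.le hJ hs hJs
  rw [norm_β, norm_one_sub_β, abs_le] at distance_le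
  constructor <;> linarith
end

section
/- Let n ≥ 1, T ≥ 1, let O be a real orthogonal n×n matrix, W a real n×n matrix, β ∈ (0,1], and γ, σ ≥ 0 with ‖W‖ = σ, and assume 1 − β(γσ + 1) > 0. For t = 0, …, T−1 let D_t be a real diagonal n×n matrix with ‖D_t‖ ≤ γ, and set J_t = β·D_t·W + (1−β)·O (the input-driven Jacobians of an ES²N along a trajectory). Suppose r : {0,…,T−1} → ℝ assigns to each t a singular value r(t) of J_t, i.e., r(t) ≥ 0 and r(t)² is an eigenvalue of J_t·J_tᵀ. Then the time-averaged log expansion rate satisfies log(1 − β(γσ + 1)) ≤ (1/T)·Σ_{t=0}^{T−1} log r(t) ≤ log(1 + β(γσ − 1)). Consequently the maximum local Lyapunov exponent Λ, defined as the maximum over the n choices of singular-value branch of this time average, obeys the same bounds: log(1 − β(γσ+1)) ≤ Λ ≤ log(1 + β(γσ−1)). -/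
open Matrix

/-!
The Jacobian `β • (D * W) + (1 - β) • O` is a perturbation of size at most `β * γ * σ` of a scaled
orthogonal matrix, all of whose singular values equal `1 - β`. Singular values move by at most the
operator norm of the perturbation, so those of the Jacobian lie within `β * γ * σ` of `1 - β`;
taking logarithms and averaging over time preserves the bounds. In a C⋆-algebra, where no
eigenvector is available, the perturbation bound from below comes from the inverse: singular values
of a unit `u` are at least `‖u⁻¹‖⁻¹`, and this quantity is 1-Lipschitz in `u`.
-/

theorem inv_norm_inv_sub_norm_sub_le {R : Type*} [NormedRing R] (u v : Rˣ) :
    ‖(↑u⁻¹ : R)‖⁻¹ - ‖(v : R) - u‖ ≤ ‖(↑v⁻¹ : R)‖⁻¹ := by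
  nontriviality R
  have hu : 0 < ‖(↑u⁻¹ : R)‖ := Units.norm_pos u⁻¹
  have hv : 0 < ‖(↑v⁻¹ : R)‖ := Units.norm_pos v⁻¹
  have resolvent_identity : (↑v⁻¹ : R) = ↑u⁻¹ - ↑u⁻¹ * (v - u) * ↑v⁻¹ := by
    simp [mul_sub, sub_mul, mul_assoc]
  have hbound : ‖(↑v⁻¹ : R)‖ ≤
      ‖(↑u⁻¹ : R)‖ + ‖(↑u⁻¹ : R)‖ * ‖(v : R) - u‖ * ‖(↑v⁻¹ : R)‖ :=
    calc ‖(↑v⁻¹ : R)‖ = ‖(↑u⁻¹ : R) - ↑u⁻¹ * (v - u) * ↑v⁻¹‖ := congrArg _ resolvent_identity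
      _ ≤ _ := norm_sub_le_of_le le_rfl (norm_mul₃_le ..)
  field_simp
  linarith

/-- `r` is a singular value of `a`: a nonnegative square root of a spectral value of `a * star a`.
For a real square matrix, `star a` is the transpose and the spectrum is the set of eigenvalues. -/
def IsSingularValue {A : Type*} [Ring A] [Algebra ℝ A] [Star A] (a : A) (r : ℝ) : Prop :=
  0 ≤ r ∧ r ^ 2 ∈ spectrum ℝ (a * star a)

theorem isSingularValue_iff_mul_transpose {n : Type*} [Fintype n] [DecidableEq n]
    {M : Matrix n n ℝ} {r : ℝ} :
    IsSingularValue M r ↔ 0 ≤ r ∧ r ^ 2 ∈ spectrum ℝ (M * Mᵀ) := by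
  rw [IsSingularValue, star_eq_conjTranspose, conjTranspose_eq_transpose_of_trivial]

namespace IsSingularValue

protected theorem nontrivial {A : Type*} [Ring A] [Algebra ℝ A] [Star A] {a : A} {r : ℝ}
    (h : IsSingularValue a r) : Nontrivial A := by
  by_contra hA
  rw [not_nontrivial_iff_subsingleton] at hA
  exact Set.notMem_empty _ (spectrum.of_subsingleton (R := ℝ) (a * star a) ▸ h.2)

variable {A : Type*} [NormedRing A] [StarRing A] [CStarRing A] [NormedAlgebra ℝ A]
  [CompleteSpace A] {a : A} {r : ℝ}

theorem le_norm (h : IsSingularValue a r) : r ≤ ‖a‖ := by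
  have := h.nontrivial
  have hsq : ‖r ^ 2‖ ≤ ‖a * star a‖ := spectrum.norm_le_norm_of_mem h.2
  rw [CStarRing.norm_self_mul_star, ← sq, norm_pow, Real.norm_of_nonneg h.1] at hsq
  exact le_of_sq_le_sq hsq (norm_nonneg a)

theorem inv_norm_inv_le {u : Aˣ} (h : IsSingularValue (u : A) r) : ‖(↑u⁻¹ : A)‖⁻¹ ≤ r := by
  have := h.nontrivial
  have hmem : (r ^ 2)⁻¹ ∈ spectrum ℝ (star (↑u⁻¹ : A) * ↑u⁻¹) := by
    simpa using (spectrum.inv₀_mem_inv_iff (a := u * star u)).2 h.2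
  have hr : 0 < r := h.1.lt_of_ne' fun hr0 =>
    spectrum.zero_notMem ℝ (u * star u).isUnit (by simpa [hr0] using h.2)
  have hsq : ‖(r ^ 2)⁻¹‖ ≤ ‖star (↑u⁻¹ : A) * ↑u⁻¹‖ := spectrum.norm_le_norm_of_mem hmem
  rw [CStarRing.norm_star_mul_self, ← sq, ← inv_pow, norm_pow, norm_inv,
    Real.norm_of_nonneg h.1] at hsq
  exact inv_le_of_inv_le₀ hr (le_of_sq_le_sq hsq (norm_nonneg _))

theorem inv_norm_inv_sub_le (h : IsSingularValue a r) (u : Aˣ) :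
    ‖(↑u⁻¹ : A)‖⁻¹ - ‖a - u‖ ≤ r := by
  rcases lt_or_ge ‖a - u‖ ‖(↑u⁻¹ : A)‖⁻¹ with hlt | hge
  · exact (inv_norm_inv_sub_norm_sub_le u (u.ofNearby a hlt)).trans (inv_norm_inv_le h)
  · exact (sub_nonpos.2 hge).trans h.1

theorem abs_sub_le_norm_sub_smul (h : IsSingularValue a r) {U : A} (hU : U ∈ unitary A)
    {c : ℝ} (hc : 0 ≤ c) : |r - c| ≤ ‖a - c • U‖ := by
  have := h.nontrivial
  have hnorm : ‖c • U‖ = c := by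
    rw [norm_smul, CStarRing.norm_of_mem_unitary hU, mul_one, Real.norm_of_nonneg hc]
  have upper : r ≤ c + ‖a - c • U‖ :=
    calc r ≤ ‖a‖ := h.le_norm
      _ ≤ ‖c • U‖ + ‖a - c • U‖ := norm_le_norm_add_norm_sub' a (c • U)
      _ = c + ‖a - c • U‖ := by rw [hnorm]
  have lower : c - ‖a - c • U‖ ≤ r := by
    rcases hc.eq_or_lt with rfl | hc
    · exact (sub_nonpos.2 (norm_nonneg _)).trans h.1
    let u : Aˣ :=
      { val := c • U
        inv := c⁻¹ • star U
        val_inv := by simp [Unitary.mul_star_self_of_mem hU, hc.ne']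
        inv_val := by simp [Unitary.star_mul_self_of_mem hU, hc.ne'] }
    have hu : ‖(↑u⁻¹ : A)‖⁻¹ = c := by
      change ‖c⁻¹ • star U‖⁻¹ = c
      rw [norm_smul, norm_star, CStarRing.norm_of_mem_unitary hU, mul_one, norm_inv, inv_inv,
        Real.norm_of_nonneg hc.le]
    simpa only [hu] using h.inv_norm_inv_sub_le u
  rw [abs_sub_le_iff]
  constructor <;> linarith

end IsSingularValue

section

open scoped BigOperators

theorem expect_log_mem_Icc {ι : Type*} {s : Finset ι} (hs : s.Nonempty) {a b : ℝ} (ha : 0 < a)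
    {f : ι → ℝ} (hf : ∀ i ∈ s, f i ∈ Set.Icc a b) :
    𝔼 i ∈ s, Real.log (f i) ∈ Set.Icc (Real.log a) (Real.log b) :=
  ⟨Finset.le_expect hs fun i hi => Real.log_le_log ha (hf i hi).1,
    Finset.expect_le hs fun i hi => Real.log_le_log (ha.trans_le (hf i hi).1) (hf i hi).2⟩

variable {A : Type*} [NormedRing A] [StarRing A] [CStarRing A] [NormedAlgebra ℝ A]
  [CompleteSpace A] {O W : A} {β γ σ : ℝ}

theorem IsSingularValue.mem_Icc_of_es2n_jacobian {D : A} {r : ℝ} (hO : O ∈ unitary A)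
    (hβ : β ∈ Set.Icc (0 : ℝ) 1) (hW : ‖W‖ ≤ σ) (hD : ‖D‖ ≤ γ)
    (h : IsSingularValue (β • (D * W) + (1 - β) • O) r) :
    r ∈ Set.Icc (1 - β * (γ * σ + 1)) (1 + β * (γ * σ - 1)) := by
  have hdist : |r - (1 - β)| ≤ β * (γ * σ) :=
    calc |r - (1 - β)| ≤ ‖β • (D * W) + (1 - β) • O - (1 - β) • O‖ :=
          h.abs_sub_le_norm_sub_smul hO (sub_nonneg.2 hβ.2)
      _ = β * ‖D * W‖ := by rw [add_sub_cancel_right, norm_smul, Real.norm_of_nonneg hβ.1]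
      _ ≤ β * (γ * σ) := mul_le_mul_of_nonneg_left (norm_mul_le_of_le hD hW) hβ.1
  rw [abs_le] at hdist
  constructor <;> linarith

theorem es2n_mlle_bounds_general {τ κ : Type*} [Fintype τ] [Nonempty τ]
    (hO : O ∈ unitary A) (hβ : β ∈ Set.Icc (0 : ℝ) 1) (hW : ‖W‖ ≤ σ)
    (hpos : 0 < 1 - β * (γ * σ + 1)) {D J : τ → A} (hD : ∀ t, ‖D t‖ ≤ γ)
    (hJ : ∀ t, J t = β • (D t * W) + (1 - β) • O)
    {r : τ → ℝ} (hr : ∀ t, IsSingularValue (J t) (r t))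
    {R : κ → τ → ℝ} (hR : ∀ m t, IsSingularValue (J t) (R m t))
    {s : Finset κ} (hs : s.Nonempty) :
    𝔼 t, Real.log (r t) ∈
        Set.Icc (Real.log (1 - β * (γ * σ + 1))) (Real.log (1 + β * (γ * σ - 1))) ∧
      s.sup' hs (fun m => 𝔼 t, Real.log (R m t)) ∈
        Set.Icc (Real.log (1 - β * (γ * σ + 1))) (Real.log (1 + β * (γ * σ - 1))) := by
  have mem_Icc {q : τ → ℝ} (hq : ∀ t, IsSingularValue (J t) (q t)) :
      𝔼 t, Real.log (q t) ∈
        Set.Icc (Real.log (1 - β * (γ * σ + 1))) (Real.log (1 + β * (γ * σ - 1))) :=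
    expect_log_mem_Icc Finset.univ_nonempty hpos fun t _ =>
      IsSingularValue.mem_Icc_of_es2n_jacobian hO hβ hW (hD t) (hJ t ▸ hq t)
  obtain ⟨m, -, hm⟩ := Finset.exists_mem_eq_sup' hs fun m => 𝔼 t, Real.log (R m t)
  exact ⟨mem_Icc hr, hm ▸ mem_Icc (hR m)⟩

end

/-- Bounds on the maximum local Lyapunov exponent of an ES²N along an input-driven trajectory:
for Jacobians `J_t = β·D_t·W + (1−β)·O` with `‖D_t‖ ≤ γ` and `‖W‖ = σ`, any choice `r t` of
singular values of `J_t` has time-averaged log expansion rate between `log(1 − β(γσ+1))` and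
`log(1 + β(γσ−1))`; consequently the MLLE `Λ` (the maximum over singular-value branches of this
time average) obeys the same bounds. -/
theorem es2n_mlle_bounds {n T : ℕ} (hn : 1 ≤ n) (hT : 1 ≤ T)
    (O W : Matrix (Fin n) (Fin n) ℝ) (hO : Oᵀ * O = 1)
    (β γ σ : ℝ) (hβ : β ∈ Set.Ioc (0 : ℝ) 1) (hγ : 0 ≤ γ) (hσ : 0 ≤ σ)
    (hW : ‖Matrix.toEuclideanCLM (𝕜 := ℝ) W‖ = σ)
    (hpos : 0 < 1 - β * (γ * σ + 1))
    (D : Fin T → Matrix (Fin n) (Fin n) ℝ) (hD : ∀ t, (D t).IsDiag)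
    (hDn : ∀ t, ‖Matrix.toEuclideanCLM (𝕜 := ℝ) (D t)‖ ≤ γ)
    (J : Fin T → Matrix (Fin n) (Fin n) ℝ)
    (hJ : ∀ t, J t = β • (D t * W) + (1 - β) • O)
    (r : Fin T → ℝ)
    (hr : ∀ t, 0 ≤ r t ∧ (r t) ^ 2 ∈ spectrum ℝ (J t * (J t)ᵀ))
    (R : Fin n → Fin T → ℝ)
    (hR : ∀ m t, 0 ≤ R m t ∧ (R m t) ^ 2 ∈ spectrum ℝ (J t * (J t)ᵀ))
    (hne : (Finset.univ : Finset (Fin n)).Nonempty)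
    (Λ : ℝ)
    (hΛ : Λ = Finset.univ.sup' hne fun m => (1 / (T : ℝ)) * ∑ t, Real.log (R m t)) :
    (Real.log (1 - β * (γ * σ + 1)) ≤ (1 / (T : ℝ)) * ∑ t, Real.log (r t) ∧
      (1 / (T : ℝ)) * ∑ t, Real.log (r t) ≤ Real.log (1 + β * (γ * σ - 1))) ∧
    (Real.log (1 - β * (γ * σ + 1)) ≤ Λ ∧ Λ ≤ Real.log (1 + β * (γ * σ - 1))) := by
  have : Nonempty (Fin T) := Fin.pos_iff_nonempty.1 hT
  open scoped Matrix.Norms.L2Operator in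
  simpa only [hΛ, Fintype.expect_eq_sum_div_card, Fintype.card_fin, one_div_mul_eq_div, Set.mem_Icc]
    using es2n_mlle_bounds_general ((mem_orthogonalGroup_iff' _ _).2 hO) ⟨hβ.1.le, hβ.2⟩ hW.le
      hpos hDn hJ (fun t => isSingularValue_iff_mul_transpose.2 (hr t))
      (fun m t => isSingularValue_iff_mul_transpose.2 (hR m t)) hne
end
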